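/- Let p be a prime and G a finite p-group which admits a faithful irreducible representation on an N-dimensional rational vector space (N ≥ 1). Then F(G) ≤ ν_p(N) + 1, where F denotes the Frattini length and ν_p the p-adic valuation. -/

import Mathlib

/-- The iterated Frattini series: `Φ⁰(G) = G` and `Φⁿ⁺¹(G) = Φ(Φⁿ(G))`,
viewed as subgroups of `G`. -/
def frattiniSeries (G : Type*) [Group G] : ℕ → Subgroup G
  | 0 => ⊤
  | n + 1 => (frattini (frattiniSeries G n)).map (frattiniSeries G n).subtype

/-- The Frattini length: the least `n` with `Φⁿ(G) = {1}`. -/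
noncomputable def frattiniLength (G : Type*) [Group G] : ℕ :=
  sInf {n | frattiniSeries G n = ⊥}

/-- A representation is irreducible if the space is nonzero and the only invariant
subspaces are `⊥` and `⊤`. -/
def Representation.IsIrreducibleRep {k G V : Type*} [CommSemiring k] [Monoid G]
    [AddCommMonoid V] [Module k V] (ρ : Representation k G V) : Prop :=
  Nontrivial V ∧ ∀ W : Submodule k V, (∀ g : G, W.map (ρ g) ≤ W) → W = ⊥ ∨ W = ⊤

/-!
In a finite `p`-group the Frattini subgroup of `H` lies in the verbal subgroup `H ^ p [H, H]`, which
is monotone in `H` and compatible with homomorphisms; iterating it bounds the Frattini series and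
lets one argue by induction on the order of `G`, for all irreducible rational representations `V`
at once. Passing to the quotient by the kernel, `V` may be assumed faithful.

If `G` has a noncyclic abelian normal subgroup `A`, let `B ≤ A` be a subgroup of largest order with
`V ^ B ≠ 0`. By maximality a vector fixed by two distinct conjugates of `B` is zero, and averaging
over `B` then shows that `V` is the direct sum of the distinct translates of `W = V ^ B`. If the
stabilizer `M` of `W` has index `p ^ e`, then `dim V = p ^ e * dim W`, while the `e`-th verbal
iterate of `G` lies in `M`, and induction applies to `M` acting on `W`.

Otherwise every abelian normal subgroup is cyclic. A maximal one, `⟨x⟩`, is its own centralizer,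
and computing with the action on `⟨x⟩` as in Roquette's theorem gives `Φ(G) ≤ ⟨x ^ p⟩`. If `x` has
order `p ^ (n + 1)`, no nonzero vector is fixed by `x ^ p ^ n`, so `V` is a vector space over the
`p ^ (n + 1)`-th cyclotomic field and `p ^ n` divides `dim V`.
-/

section FrattiniSubgroup

/-- The verbal subgroup `H ^ p [H, H]`, which for a finite `p`-group `H` is the Frattini subgroup
of `H`, regarded as a subgroup of the ambient group `G`. Unlike `frattini`, it is by construction
monotone in `H` and compatible with homomorphisms. -/
def pFrattini {G : Type*} [Group G] (p : ℕ) (H : Subgroup G) : Subgroup G :=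
  ⁅H, H⁆ ⊔ Subgroup.closure ((· ^ p) '' (H : Set G))

variable {G G' : Type*} [Group G] [Group G'] {p : ℕ}

lemma pFrattini_le_iff {H K : Subgroup G} :
    pFrattini p H ≤ K ↔ ⁅H, H⁆ ≤ K ∧ ∀ h ∈ H, h ^ p ∈ K := by
  rw [pFrattini, sup_le_iff, Subgroup.closure_le, Set.image_subset_iff]
  rfl

lemma commutator_le_pFrattini (H : Subgroup G) : ⁅H, H⁆ ≤ pFrattini p H :=
  le_sup_left

lemma pow_mem_pFrattini {H : Subgroup G} {h : G} (hh : h ∈ H) : h ^ p ∈ pFrattini p H :=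
  (pFrattini_le_iff.1 le_rfl).2 h hh

lemma pFrattini_mono : Monotone (pFrattini p : Subgroup G → Subgroup G) := fun _ _ h =>
  sup_le_sup (Subgroup.commutator_mono h h) (Subgroup.closure_mono (Set.image_mono h))

lemma map_pFrattini (f : G →* G') (H : Subgroup G) :
    (pFrattini p H).map f = pFrattini p (H.map f) := by
  have hpow : f '' ((· ^ p) '' (H : Set G)) = (· ^ p) '' (f '' (H : Set G)) := by
    simp only [Set.image_image, map_pow]
  rw [pFrattini, Subgroup.map_sup, Subgroup.map_commutator, MonoidHom.map_closure, hpow, pFrattini,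
    Subgroup.coe_map]

lemma map_iterate_pFrattini (f : G →* G') (H : Subgroup G) (n : ℕ) :
    ((pFrattini p)^[n] H).map f = (pFrattini p)^[n] (H.map f) :=
  Function.Semiconj.iterate_right (f := Subgroup.map f) (map_pFrattini f) n H

lemma normal_iterate_pFrattini {H : Subgroup G} [H.Normal] (n : ℕ) :
    ((pFrattini p)^[n] H).Normal := by
  refine Subgroup.normal_iff_map_conj_eq.2 fun g => ?_
  rw [map_iterate_pFrattini, Subgroup.Normal.map_conj_eq]

lemma pFrattini_zpowers_le (x : G) :
    pFrattini p (Subgroup.zpowers x) ≤ Subgroup.zpowers (x ^ p) := by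
  refine pFrattini_le_iff.2 ⟨?_, ?_⟩
  · rw [(Subgroup.commutator_eq_bot_iff_le_centralizer).2 (Subgroup.le_centralizer _)]
    exact bot_le
  · rintro _ ⟨i, rfl⟩
    exact ⟨i, by simp only [← zpow_natCast, ← zpow_mul, mul_comm]⟩

lemma iterate_pFrattini_zpowers_le (x : G) (n : ℕ) :
    (pFrattini p)^[n] (Subgroup.zpowers x) ≤ Subgroup.zpowers (x ^ p ^ n) := by
  induction n with
  | zero => simp
  | succ n ih =>
    rw [Function.iterate_succ_apply', pow_succ, pow_mul]
    exact (pFrattini_mono ih).trans (pFrattini_zpowers_le _)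

lemma frattini_eq_bot_of_pow_eq_one {E : Type*} [CommGroup E] [Fact p.Prime]
    (h : ∀ g : E, g ^ p = 1) : frattini E = ⊥ := by
  have : Module (ZMod p) (Additive E) := AddCommGroup.zmodModule h
  let e : Subgroup E ≃o Submodule (ZMod p) (Additive E) :=
    Subgroup.toAddSubgroup.trans (AddSubgroup.toZModSubmodule p)
  have hradical : Order.radical (Submodule (ZMod p) (Additive E)) = ⊥ := by
    rw [Order.radical, ← sInf_eq_iInf]
    exact IsSemisimpleModule.jacobson_eq_bot (ZMod p) (Additive E)
  rw [frattini, ← map_eq_bot_iff e, e.map_radical, hradical]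

open scoped IsMulCommutative in
lemma frattini_le_pFrattini_top [Fact p.Prime] : frattini G ≤ pFrattini p (⊤ : Subgroup G) := by
  have : (pFrattini p (⊤ : Subgroup G)).Normal := normal_iterate_pFrattini 1
  have : IsMulCommutative (G ⧸ pFrattini p (⊤ : Subgroup G)) :=
    Subgroup.Normal.quotient_commutative_iff_commutator_le.2 (commutator_le_pFrattini ⊤)
  have hpow : ∀ q : G ⧸ pFrattini p (⊤ : Subgroup G), q ^ p = 1 := by
    rintro ⟨g⟩
    exact (QuotientGroup.eq_one_iff _).2 (pow_mem_pFrattini (Subgroup.mem_top g))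
  calc frattini G
      ≤ (frattini (G ⧸ pFrattini p (⊤ : Subgroup G))).comap (QuotientGroup.mk' _) :=
        frattini_le_comap_frattini_of_surjective (QuotientGroup.mk'_surjective _)
    _ = pFrattini p ⊤ := by
        rw [frattini_eq_bot_of_pow_eq_one hpow, MonoidHom.comap_bot, QuotientGroup.ker_mk']

lemma frattiniSeries_le_iterate_pFrattini [Fact p.Prime] (n : ℕ) :
    frattiniSeries G n ≤ (pFrattini p)^[n] ⊤ := by
  induction n with
  | zero => exact le_rfl
  | succ n ih =>
    rw [Function.iterate_succ_apply']
    calc frattiniSeries G (n + 1)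
        ≤ (pFrattini p (⊤ : Subgroup (frattiniSeries G n))).map (frattiniSeries G n).subtype :=
          Subgroup.map_mono frattini_le_pFrattini_top
      _ = pFrattini p (frattiniSeries G n) := by
          rw [map_pFrattini, ← MonoidHom.range_eq_map, Subgroup.range_subtype]
      _ ≤ pFrattini p ((pFrattini p)^[n] ⊤) := pFrattini_mono ih

lemma pFrattini_top_le_of_index_eq [Fact p.Prime] {M : Subgroup G} [M.Normal] (hM : M.index = p) :
    pFrattini p ⊤ ≤ M := by
  have : IsCyclic (G ⧸ M) := isCyclic_of_prime_card (p := p) hM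
  refine pFrattini_le_iff.2 ⟨?_, fun g _ => hM ▸ M.pow_index_mem g⟩
  exact Subgroup.Normal.quotient_commutative_iff_commutator_le.1 IsCyclic.isMulCommutative

lemma pFrattini_le_of_relIndex_eq [Fact p.Prime] [Finite G] (hG : IsPGroup p G)
    {M K : Subgroup G} (hMK : M ≤ K) (hM : M.relIndex K = p) : pFrattini p K ≤ M := by
  have hnormal : (M.subgroupOf K).Normal := by
    have hK : p ∣ Nat.card K := hM ▸ M.relIndex_dvd_card K
    obtain ⟨n, hn⟩ := IsPGroup.iff_card.1 (hG.to_subgroup K)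
    have hn0 : n ≠ 0 := by
      rintro rfl
      exact (Fact.out : p.Prime).one_lt.not_ge (Nat.le_of_dvd one_pos (by simpa [hn] using hK))
    refine Subgroup.normal_of_index_eq_minFac_card ?_
    rw [hn, Nat.Prime.pow_minFac Fact.out hn0]
    exact hM
  calc pFrattini p K = (pFrattini p (⊤ : Subgroup K)).map K.subtype := by
        rw [map_pFrattini, ← MonoidHom.range_eq_map, Subgroup.range_subtype]
    _ ≤ (M.subgroupOf K).map K.subtype := Subgroup.map_mono (pFrattini_top_le_of_index_eq hM)
    _ = M := Subgroup.map_subgroupOf_eq_of_le hMK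

lemma exists_le_relIndex_eq [Fact p.Prime] [Finite G] (hG : IsPGroup p G) {M : Subgroup G} {e : ℕ}
    (hM : M.index = p ^ (e + 1)) : ∃ K, M ≤ K ∧ M.relIndex K = p ∧ K.index = p ^ e := by
  have hp : 0 < p := (Fact.out : p.Prime).pos
  obtain ⟨m, hm⟩ := IsPGroup.iff_card.1 (hG.to_subgroup M)
  have hdvd : p ^ (m + 1) ∣ Nat.card G := by
    rw [← M.card_mul_index, hm, hM, ← pow_add]
    exact pow_dvd_pow p (by lia)
  obtain ⟨K, hK, hMK⟩ := Sylow.exists_subgroup_card_pow_succ hdvd hm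
  have hrel : M.relIndex K = p := by
    have h := Subgroup.relIndex_mul_relIndex ⊥ M K bot_le hMK
    rw [Subgroup.relIndex_bot_left, Subgroup.relIndex_bot_left, hK, hm, pow_succ] at h
    exact Nat.eq_of_mul_eq_mul_left (pow_pos hp m) h
  refine ⟨K, hMK, hrel, Nat.eq_of_mul_eq_mul_left hp ?_⟩
  rw [← pow_succ', ← hM, ← Subgroup.relIndex_mul_index hMK, hrel]

lemma iterate_pFrattini_top_le_of_index_eq [Fact p.Prime] [Finite G] (hG : IsPGroup p G)
    {M : Subgroup G} {e : ℕ} (hM : M.index = p ^ e) : (pFrattini p)^[e] ⊤ ≤ M := by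
  induction e generalizing M with
  | zero => exact (Subgroup.index_eq_one.1 hM).ge
  | succ e ih =>
    obtain ⟨K, hMK, hrel, hK⟩ := exists_le_relIndex_eq hG hM
    rw [Function.iterate_succ_apply']
    exact (pFrattini_mono (ih hK)).trans (pFrattini_le_of_relIndex_eq hG hMK hrel)

end FrattiniSubgroup

section AbelianNormal

variable {G : Type*} [Group G] {p : ℕ}

lemma exists_mem_center_of_normal_of_ne_bot [Fact p.Prime] [Finite G] (hG : IsPGroup p G)
    {N : Subgroup G} [N.Normal] (hN : N ≠ ⊥) : ∃ z ∈ N, z ∈ Subgroup.center G ∧ z ≠ 1 := by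
  have hConj : IsPGroup p (ConjAct G) := hG.of_equiv ConjAct.toConjAct
  have hcard : p ∣ Nat.card N := by
    have : Nontrivial N := N.nontrivial_iff_ne_bot.2 hN
    obtain ⟨n, hn, hcard⟩ := (hG.to_subgroup N).nontrivial_iff_card.1 ‹_›
    exact hcard ▸ dvd_pow_self p hn.ne'
  obtain ⟨z, hfixed, hz1⟩ := hConj.exists_fixed_point_of_prime_dvd_card_of_fixed_point N hcard
    (a := 1) fun g => smul_one g
  refine ⟨z, z.2, Subgroup.mem_center_iff.2 fun g => ?_, fun h => hz1 (Subtype.ext h.symm)⟩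
  have hg : g * z * g⁻¹ = z := congrArg Subtype.val (hfixed (ConjAct.toConjAct g))
  exact mul_inv_eq_iff_eq_mul.1 hg

lemma exists_isMulCommutative_normal_centralizer_le [Fact p.Prime] [Finite G] (hG : IsPGroup p G) :
    ∃ A : Subgroup G, A.Normal ∧ IsMulCommutative A ∧ Subgroup.centralizer A ≤ A := by
  obtain ⟨A, ⟨hnormal, hcomm⟩, hmax⟩ := Set.Finite.exists_maximal
    (s := {A : Subgroup G | A.Normal ∧ IsMulCommutative A}) (Set.toFinite _)
    ⟨⊥, inferInstance, inferInstance⟩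
  refine ⟨A, hnormal, hcomm, ?_⟩
  by_contra hA
  have hC : (Subgroup.centralizer (A : Set G)).map (QuotientGroup.mk' A) ≠ ⊥ := by
    rwa [Ne, Subgroup.map_eq_bot_iff, QuotientGroup.ker_mk']
  have := Subgroup.Normal.map (H := Subgroup.centralizer (A : Set G)) inferInstance _
    (QuotientGroup.mk'_surjective A)
  obtain ⟨_, ⟨y, hyC, rfl⟩, hy, hy1⟩ := exists_mem_center_of_normal_of_ne_bot (hG.to_quotient A) hC
  have hL : Subgroup.zpowers y ⊔ A =
      (Subgroup.zpowers (QuotientGroup.mk' A y)).comap (QuotientGroup.mk' A) := by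
    rw [← MonoidHom.map_zpowers, Subgroup.comap_map_eq, QuotientGroup.ker_mk']
  have hLnormal : (Subgroup.zpowers y ⊔ A).Normal := by
    have : (Subgroup.zpowers (QuotientGroup.mk' A y)).Normal :=
      ⟨fun c hc g => by
        rwa [Subgroup.mem_center_iff.1 (Subgroup.zpowers_le.2 hy hc) g, mul_inv_cancel_right]⟩
    rw [hL]
    infer_instance
  have hLcomm : IsMulCommutative (Subgroup.zpowers y ⊔ A : Subgroup G) := by
    rw [Subgroup.zpowers_eq_closure, ← Subgroup.closure_eq A, ← Subgroup.closure_union]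
    refine Subgroup.isMulCommutative_closure ?_
    rintro a (rfl | ha) b (rfl | hb)
    · rfl
    · exact (hyC b hb).symm
    · exact hyC a ha
    · exact setLike_mul_comm ha hb
  have hyA : y ∈ A :=
    hmax ⟨hLnormal, hLcomm⟩ le_sup_right (Subgroup.mem_sup_left (Subgroup.mem_zpowers y))
  exact hy1 ((QuotientGroup.eq_one_iff y).2 hyA)

end AbelianNormal

section CyclicNormal

variable {G : Type*} [Group G] {p : ℕ} {g x : G} {a : ℤ}

lemma mul_mul_inv_mul_inv_mem_centralizer_of_isCyclic {A : Subgroup G} [A.Normal] [IsCyclic A]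
    (g h : G) : g * h * g⁻¹ * h⁻¹ ∈ Subgroup.centralizer (A : Set G) := by
  have hcomm (φ ψ : MulAut A) : φ * ψ = ψ * φ :=
    (IsCyclic.mulAutMulEquiv A).injective (by rw [map_mul, map_mul, mul_comm])
  have hker : MulAut.conjNormal (H := A) (g * h * g⁻¹ * h⁻¹) = 1 := by
    simp only [map_mul, map_inv]
    rw [hcomm (MulAut.conjNormal g), mul_inv_cancel_right, mul_inv_cancel]
  intro y hy
  have hconj := congrArg Subtype.val (DFunLike.congr_fun hker ⟨y, hy⟩)
  rw [MulAut.conjNormal_apply] at hconj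
  exact (mul_inv_eq_iff_eq_mul.1 hconj).symm

lemma mem_zpowers_of_pow_orderOf_eq_one [Finite G] [IsCyclic G] {y z : G}
    (h : y ^ orderOf z = 1) : y ∈ Subgroup.zpowers z := by
  let : CommGroup G := IsCyclic.commGroup
  have hle : Subgroup.zpowers z ≤ (powMonoidHom (orderOf z)).ker :=
    Subgroup.zpowers_le.2 (pow_orderOf_eq_one z)
  have hcard : Nat.card (powMonoidHom (orderOf z) : G →* G).ker =
      Nat.card (Subgroup.zpowers z) := by
    rw [IsCyclic.card_powMonoidHom_ker, Nat.gcd_eq_right (orderOf_dvd_natCard z), Nat.card_zpowers]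
  rw [Subgroup.eq_of_le_of_card_ge hle hcard.le]
  exact h

lemma mem_zpowers_of_mem_of_pow_orderOf_eq_one {C : Subgroup G} [Finite C] [IsCyclic C] {y z : G}
    (hy : y ∈ C) (hz : z ∈ C) (h : y ^ orderOf z = 1) : y ∈ Subgroup.zpowers z := by
  have hC : (⟨y, hy⟩ : C) ∈ Subgroup.zpowers (⟨z, hz⟩ : C) :=
    mem_zpowers_of_pow_orderOf_eq_one (Subtype.ext (by rwa [Subgroup.orderOf_mk]))
  have hmap := Subgroup.mem_map_of_mem C.subtype hC
  rwa [MonoidHom.map_zpowers] at hmap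

lemma dvd_orderOf_of_ne_one [Fact p.Prime] (hG : IsPGroup p G) (hx : x ≠ 1) : p ∣ orderOf x := by
  obtain ⟨n, hn⟩ := IsPGroup.iff_orderOf.1 hG x
  have hn0 : n ≠ 0 := by
    rintro rfl
    exact hx (orderOf_eq_one_iff.1 hn)
  exact hn ▸ dvd_pow_self p hn0

lemma exists_semiconjBy_zpow (hx : (Subgroup.zpowers x).Normal) (g : G) :
    ∃ a : ℤ, SemiconjBy g x (x ^ a) := by
  obtain ⟨a, ha⟩ := hx.conj_mem x (Subgroup.mem_zpowers x) g
  exact ⟨a, mul_inv_eq_iff_eq_mul.1 ha.symm⟩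

lemma mul_pow_of_semiconjBy_zpow (h : SemiconjBy g x (x ^ a)) (i : ℤ) (m : ℕ) :
    (x ^ i * g) ^ m = x ^ (i * ∑ j ∈ Finset.range m, a ^ j) * g ^ m := by
  induction m with
  | zero => simp
  | succ m ih =>
    have hg := h.zpow_right (i * ∑ j ∈ Finset.range m, a ^ j)
    rw [pow_succ', ih, geom_sum_succ, pow_succ', mul_assoc, ← mul_assoc g, hg.eq, ← zpow_mul,
      mul_assoc, ← mul_assoc, ← zpow_add]
    ring_nf

lemma pow_semiconjBy_zpow_pow (h : SemiconjBy g x (x ^ a)) (m : ℕ) :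
    SemiconjBy (g ^ m) x (x ^ a ^ m) := by
  induction m with
  | zero => simp
  | succ m ih =>
    rw [pow_succ', pow_succ', zpow_mul]
    exact (h.zpow_right (a ^ m)).mul_left ih

lemma dvd_sub_one_of_semiconjBy_zpow [Fact p.Prime] (hG : IsPGroup p G) (hx : p ∣ orderOf x)
    (h : SemiconjBy g x (x ^ a)) : (p : ℤ) ∣ a - 1 := by
  obtain ⟨k, hk⟩ := isPGroup_iff_pow_pow_eq_one.1 hG g
  have hpow := pow_semiconjBy_zpow_pow h (p ^ k)
  rw [hk, SemiconjBy, one_mul, mul_one] at hpow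
  have hdvd : (p : ℤ) ∣ a ^ p ^ k - 1 := by
    refine (Int.natCast_dvd_natCast.2 hx).trans (orderOf_dvd_iff_zpow_eq_one.2 ?_)
    rw [zpow_sub_one, ← hpow, mul_inv_cancel]
  rw [← ZMod.intCast_zmod_eq_zero_iff_dvd] at hdvd ⊢
  push_cast at hdvd ⊢
  rwa [ZMod.pow_card_pow] at hdvd

lemma exists_geom_sum_eq_mul [Fact p.Prime] (ha : (p : ℤ) ∣ a - 1) (h2 : p = 2 → 4 ∣ a - 1) :
    ∃ s : ℤ, ∑ j ∈ Finset.range p, a ^ j = p * s ∧ ¬ (p : ℤ) ∣ s := by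
  obtain rfl | hodd := eq_or_ne p 2
  · obtain ⟨b, hb⟩ := h2 rfl
    refine ⟨1 + 2 * b, ?_, by push_cast; lia⟩
    rw [geom_sum_two]
    push_cast
    linarith
  · obtain ⟨b, hb⟩ := ha
    obtain rfl : a = 1 + p * b := by linarith
    obtain ⟨c, hc⟩ := odd_sq_dvd_geom_sum₂_sub (R := ℤ) (a := 1) (b := b)
      (Nat.Prime.odd_of_ne_two Fact.out hodd)
    simp only [one_pow, mul_one] at hc
    refine ⟨1 + p * c, by linear_combination hc, fun hd => ?_⟩
    exact (Nat.prime_iff_prime_int.1 Fact.out).not_dvd_one ((dvd_add_left (dvd_mul_right _ c)).1 hd)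

-- The geometric sum is the exponent of `x` in `(x ^ i * g) ^ p`, so inverting `s` modulo the order
-- of `x` gives an `i` that cancels `g ^ p`.
lemma exists_zpow_mul_pow_eq_one {s : ℤ} (h : SemiconjBy g x (x ^ a))
    (hsum : ∑ j ∈ Finset.range p, a ^ j = p * s) (hs : IsCoprime s (orderOf x))
    (hgp : g ^ p ∈ Subgroup.zpowers (x ^ p)) : ∃ i : ℤ, (x ^ i * g) ^ p = 1 := by
  obtain ⟨m, hm⟩ := hgp
  obtain ⟨u, v, huv⟩ := hs
  refine ⟨-(m * u), ?_⟩
  rw [mul_pow_of_semiconjBy_zpow h, hsum, ← hm]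
  simp only [← zpow_natCast, ← zpow_mul, ← zpow_add, ← orderOf_dvd_iff_zpow_eq_one]
  exact ⟨p * m * v, by linear_combination (-(p : ℤ) * m) * huv⟩

lemma zpow_pow_eq_one_of_zpow_mul_pow_eq_one {s j : ℤ} (h : SemiconjBy g x (x ^ a))
    (hsum : ∑ j ∈ Finset.range p, a ^ j = p * s) (hs : IsCoprime s (orderOf x))
    (hgp : g ^ p = 1) (hj : (x ^ j * g) ^ p = 1) : (x ^ j) ^ p = 1 := by
  rw [mul_pow_of_semiconjBy_zpow h, hsum, hgp, mul_one, ← orderOf_dvd_iff_zpow_eq_one,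
    ← mul_assoc] at hj
  rw [← zpow_natCast, ← zpow_mul, ← orderOf_dvd_iff_zpow_eq_one]
  exact hs.symm.dvd_of_dvd_mul_right hj

lemma normal_zpowers_sup_zpowers {s : ℤ} {h z : G} [Finite G]
    (hx : (Subgroup.zpowers x).Normal) (hcent : ∀ g, Commute g x → g ∈ Subgroup.zpowers x)
    (hh : SemiconjBy h x (x ^ a)) (hsum : ∑ j ∈ Finset.range p, a ^ j = p * s)
    (hs : IsCoprime s (orderOf x)) (hhp : h ^ p = 1) (hz : z ∈ Subgroup.zpowers x)
    (hzp : orderOf z = p) : (Subgroup.zpowers z ⊔ Subgroup.zpowers h).Normal := by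
  have hconj_z (k : G) : k * z * k⁻¹ ∈ Subgroup.zpowers z := by
    refine mem_zpowers_of_mem_of_pow_orderOf_eq_one (hx.conj_mem z hz k) hz ?_
    rw [conj_pow, pow_orderOf_eq_one, mul_one, mul_inv_cancel]
  have hconj_h (k : G) : k * h * k⁻¹ ∈ Subgroup.zpowers z ⊔ Subgroup.zpowers h := by
    obtain ⟨j, hj⟩ := hcent (k * h * k⁻¹ * h⁻¹)
      (mul_mul_inv_mul_inv_mem_centralizer_of_isCyclic k h x (Subgroup.mem_zpowers x)).symm
    have hjh : k * h * k⁻¹ = x ^ j * h := eq_mul_of_mul_inv_eq hj.symm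
    have hjp : (x ^ j) ^ p = 1 := by
      refine zpow_pow_eq_one_of_zpow_mul_pow_eq_one hh hsum hs hhp ?_
      rw [← hjh, conj_pow, hhp, mul_one, mul_inv_cancel]
    have hjz : x ^ j ∈ Subgroup.zpowers z :=
      mem_zpowers_of_mem_of_pow_orderOf_eq_one (Subgroup.zpow_mem_zpowers x j) hz (hzp ▸ hjp)
    rw [hjh]
    exact mul_mem (Subgroup.mem_sup_left hjz) (Subgroup.mem_sup_right (Subgroup.mem_zpowers h))
  have hle (k : G) : (Subgroup.zpowers z ⊔ Subgroup.zpowers h).map (MulAut.conj k).toMonoidHom ≤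
      Subgroup.zpowers z ⊔ Subgroup.zpowers h := by
    rw [Subgroup.map_sup, MonoidHom.map_zpowers, MonoidHom.map_zpowers]
    exact sup_le (Subgroup.zpowers_le.2 (Subgroup.mem_sup_left (hconj_z k)))
      (Subgroup.zpowers_le.2 (hconj_h k))
  exact ⟨fun y hy k => hle k (Subgroup.mem_map_of_mem _ hy)⟩

lemma pow_mem_zpowers_pow_of_pow_mem_zpowers [Fact p.Prime] (hG : IsPGroup p G)
    (hcent : ∀ g, Commute g x → g ∈ Subgroup.zpowers x) (hg : g ^ p ∈ Subgroup.zpowers x) :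
    g ^ p ∈ Subgroup.zpowers (x ^ p) := by
  by_cases hgx : g ∈ Subgroup.zpowers x
  · obtain ⟨i, rfl⟩ := hgx
    exact ⟨i, by simp only [← zpow_natCast, ← zpow_mul, mul_comm]⟩
  obtain ⟨m, hm⟩ := hg
  have hpm : (p : ℤ) ∣ m := by
    by_contra hpm
    obtain ⟨n, hn⟩ := IsPGroup.iff_orderOf.1 hG x
    have hcop : m.gcd (orderOf x) = 1 := by
      rw [← Int.isCoprime_iff_gcd_eq_one, hn, Nat.cast_pow]
      exact (((Nat.prime_iff_prime_int.1 Fact.out).coprime_iff_not_dvd.2 hpm).pow_left).symm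
    obtain ⟨i, hi⟩ := mem_zpowers_zpow_iff.2 hcop
    refine hgx (hcent g ?_)
    rw [← hi]
    simp only [hm]
    exact (Commute.refl g).pow_right p |>.zpow_right i
  obtain ⟨m, rfl⟩ := hpm
  exact ⟨m, by simpa only [zpow_mul, zpow_natCast] using hm⟩

lemma mem_zpowers_of_pow_eq_one [Finite G] {s : ℤ} {h : G}
    (hcyclic : ∀ A : Subgroup G, A.Normal → IsMulCommutative A → IsCyclic A)
    (hx : (Subgroup.zpowers x).Normal) (hcent : ∀ g, Commute g x → g ∈ Subgroup.zpowers x)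
    (hpx : p ∣ orderOf x) (hh : SemiconjBy h x (x ^ a)) (ha : (p : ℤ) ∣ a - 1)
    (hsum : ∑ j ∈ Finset.range p, a ^ j = p * s) (hs : IsCoprime s (orderOf x))
    (hhp : h ^ p = 1) : h ∈ Subgroup.zpowers x := by
  -- `h` commutes with the subgroup `⟨z⟩` of order `p` in `⟨x⟩`, and `⟨z, h⟩` is normal; being
  -- abelian it is then cyclic, which leaves room for only one subgroup of order `p`.
  set z := x ^ (orderOf x / p) with hz_def
  have hz : z ∈ Subgroup.zpowers x := Subgroup.npow_mem_zpowers x _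
  have hzp : orderOf z = p := orderOf_pow_orderOf_div (orderOf_pos x).ne' hpx
  have hhz : Commute h z := by
    obtain ⟨b, hb⟩ := ha
    obtain rfl : a = 1 + p * b := by linarith
    have hza : z ^ (1 + p * b) = z := by
      rw [zpow_add, zpow_one, zpow_mul, zpow_natCast, ← hzp, pow_orderOf_eq_one, one_zpow, mul_one]
    have hsemi := hh.zpow_right (orderOf x / p : ℕ)
    rwa [zpow_comm, zpow_natCast, ← hz_def, hza] at hsemi
  have hnormal := normal_zpowers_sup_zpowers hx hcent hh hsum hs hhp hz hzp
  have hcomm : IsMulCommutative (Subgroup.zpowers z ⊔ Subgroup.zpowers h : Subgroup G) := by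
    rw [Subgroup.zpowers_eq_closure, Subgroup.zpowers_eq_closure, ← Subgroup.closure_union]
    refine Subgroup.isMulCommutative_closure ?_
    rintro _ (rfl | rfl) _ (rfl | rfl)
    exacts [rfl, hhz.symm, hhz, rfl]
  have := hcyclic _ hnormal hcomm
  have hmem : h ∈ Subgroup.zpowers z := mem_zpowers_of_mem_of_pow_orderOf_eq_one
    (Subgroup.mem_sup_right (Subgroup.mem_zpowers h))
    (Subgroup.mem_sup_left (Subgroup.mem_zpowers z)) (hzp.symm ▸ hhp)
  exact Subgroup.zpowers_le.2 hz hmem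

lemma mem_zpowers_of_pow_mem_zpowers [Fact p.Prime] [Finite G] (hG : IsPGroup p G)
    (hcyclic : ∀ A : Subgroup G, A.Normal → IsMulCommutative A → IsCyclic A)
    (hx : (Subgroup.zpowers x).Normal) (hcent : ∀ g, Commute g x → g ∈ Subgroup.zpowers x)
    (hgx : SemiconjBy g x (x ^ a)) (h2 : p = 2 → 4 ∣ a - 1) (hg : g ^ p ∈ Subgroup.zpowers x) :
    g ∈ Subgroup.zpowers x := by
  obtain rfl | hx1 := eq_or_ne x 1
  · exact hcent g (Commute.one_right g)
  have hpx := dvd_orderOf_of_ne_one hG hx1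
  have ha : (p : ℤ) ∣ a - 1 := dvd_sub_one_of_semiconjBy_zpow hG hpx hgx
  obtain ⟨s, hsum, hps⟩ := exists_geom_sum_eq_mul ha h2
  have hs : IsCoprime s (orderOf x) := by
    obtain ⟨n, hn⟩ := IsPGroup.iff_orderOf.1 hG x
    rw [hn, Nat.cast_pow]
    exact ((Nat.prime_iff_prime_int.1 Fact.out).coprime_iff_not_dvd.2 hps).pow_left.symm
  obtain ⟨i, hi⟩ := exists_zpow_mul_pow_eq_one hgx hsum hs
    (pow_mem_zpowers_pow_of_pow_mem_zpowers hG hcent hg)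
  have hix : SemiconjBy (x ^ i * g) x (x ^ a) :=
    SemiconjBy.mul_left (((Commute.refl x).zpow_left i).zpow_right a) hgx
  have hmem := mem_zpowers_of_pow_eq_one hcyclic hx hcent hpx hix ha hsum hs hi
  exact (Subgroup.mul_mem_cancel_left _ (Subgroup.zpow_mem_zpowers x i)).1 hmem

lemma zpowers_eq_top_of_odd [Fact p.Prime] [Finite G] (hG : IsPGroup p G) (hp2 : p ≠ 2)
    (hcyclic : ∀ A : Subgroup G, A.Normal → IsMulCommutative A → IsCyclic A)
    (hx : (Subgroup.zpowers x).Normal) (hcent : ∀ g, Commute g x → g ∈ Subgroup.zpowers x) :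
    Subgroup.zpowers x = ⊤ := by
  refine (Subgroup.eq_top_iff' _).2 fun g => ?_
  obtain ⟨k, hk⟩ := isPGroup_iff_pow_pow_eq_one.1 hG g
  induction k generalizing g with
  | zero => exact (by simpa using hk : g = 1) ▸ one_mem _
  | succ k ih =>
    obtain ⟨a, ha⟩ := exists_semiconjBy_zpow hx g
    refine mem_zpowers_of_pow_mem_zpowers hG hcyclic hx hcent ha (absurd · hp2) (ih _ ?_)
    rwa [← pow_mul, ← pow_succ']

lemma sq_mem_zpowers_of_isPGroup_two [Finite G] (hG : IsPGroup 2 G)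
    (hcyclic : ∀ A : Subgroup G, A.Normal → IsMulCommutative A → IsCyclic A)
    (hx : (Subgroup.zpowers x).Normal) (hcent : ∀ g, Commute g x → g ∈ Subgroup.zpowers x)
    (g : G) : g ^ 2 ∈ Subgroup.zpowers x := by
  have hdescend (g : G) (hg : (g ^ 2) ^ 2 ∈ Subgroup.zpowers x) : g ^ 2 ∈ Subgroup.zpowers x := by
    obtain rfl | hx1 := eq_or_ne x 1
    · exact hcent _ (Commute.one_right _)
    obtain ⟨a, ha⟩ := exists_semiconjBy_zpow hx g
    refine mem_zpowers_of_pow_mem_zpowers hG hcyclic hx hcent (pow_semiconjBy_zpow_pow ha 2)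
      (fun _ => ?_) hg
    obtain ⟨b, hb⟩ := dvd_sub_one_of_semiconjBy_zpow hG (dvd_orderOf_of_ne_one hG hx1) ha
    obtain rfl : a = 1 + 2 * b := by push_cast at hb; linarith
    exact ⟨b + b ^ 2, by ring⟩
  obtain ⟨k, hk⟩ := isPGroup_iff_pow_pow_eq_one.1 hG g
  induction k generalizing g with
  | zero => exact (by simpa using hk : g = 1) ▸ by simp
  | succ k ih => exact hdescend g (ih (g ^ 2) (by rwa [← pow_mul, ← pow_succ']))

open scoped commutatorElement in
lemma commutator_le_of_sq_mem {K : Subgroup G} (hK : ∀ g : G, g ^ 2 ∈ K) :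
    ⁅(⊤ : Subgroup G), ⊤⁆ ≤ K := by
  refine Subgroup.commutator_le.2 fun g _ h _ => ?_
  have : ⁅g, h⁆ = (g * h) ^ 2 * (h⁻¹ * g⁻¹ * h) ^ 2 * h⁻¹ ^ 2 := by
    simp only [commutatorElement_def, sq]
    group
  rw [this]
  exact mul_mem (mul_mem (hK _) (hK _)) (hK _)

lemma exists_normal_zpowers_pFrattini_top_le [Fact p.Prime] [Finite G] (hG : IsPGroup p G)
    (hcyclic : ∀ A : Subgroup G, A.Normal → IsMulCommutative A → IsCyclic A) :
    ∃ x : G, (Subgroup.zpowers x).Normal ∧ pFrattini p ⊤ ≤ Subgroup.zpowers (x ^ p) := by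
  obtain ⟨A, hA, hcomm, hcentA⟩ := exists_isMulCommutative_normal_centralizer_le hG
  obtain ⟨x, rfl⟩ := (Subgroup.isCyclic_iff_exists_zpowers_eq_top A).1 (hcyclic A hA hcomm)
  have hcent (g : G) (hg : Commute g x) : g ∈ Subgroup.zpowers x := by
    refine hcentA ?_
    rw [Subgroup.zpowers_eq_closure, Subgroup.centralizer_closure]
    exact Subgroup.mem_centralizer_singleton_iff.2 hg
  refine ⟨x, hA, ?_⟩
  obtain rfl | hp2 := eq_or_ne p 2
  · have hsq (g : G) : g ^ 2 ∈ Subgroup.zpowers (x ^ 2) :=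
      pow_mem_zpowers_pow_of_pow_mem_zpowers hG hcent
        (sq_mem_zpowers_of_isPGroup_two hG hcyclic hA hcent g)
    exact pFrattini_le_iff.2 ⟨commutator_le_of_sq_mem hsq, fun g _ => hsq g⟩
  · rw [← zpowers_eq_top_of_odd hG hp2 hcyclic hA hcent]
    exact pFrattini_zpowers_le x

end CyclicNormal

section CyclotomicDimension

open Polynomial

variable {V : Type*} [AddCommGroup V]

lemma natDegree_dvd_finrank_of_aeval_eq_zero {k : Type*} [Field k] [Module k V]
    {q : k[X]} (hq : Irreducible q) {T : Module.End k V} (hT : aeval T q = 0) :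
    q.natDegree ∣ Module.finrank k V := by
  have : Fact (Irreducible q) := ⟨hq⟩
  let f : AdjoinRoot q →ₐ[k] Module.End k V :=
    Ideal.Quotient.liftₐ (Ideal.span {q}) (aeval T) fun a ha => by
      obtain ⟨c, rfl⟩ := Ideal.mem_span_singleton.1 ha
      rw [map_mul, hT, zero_mul]
  let : Module (AdjoinRoot q) V := Module.compHom V f.toRingHom
  have : IsScalarTower k (AdjoinRoot q) V :=
    ⟨fun a b v => LinearMap.congr_fun (map_smul f a b) v⟩
  have hdegree : Module.finrank k (AdjoinRoot q) = q.natDegree := finrank_quotient_span_eq_natDegree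
  rw [← hdegree, ← Module.finrank_mul_finrank k (AdjoinRoot q) V]
  exact dvd_mul_right _ _

lemma pow_dvd_finrank_of_pow_prime_pow_eq_one [Module ℚ V] {p : ℕ} (hp : p.Prime) {n : ℕ}
    {T : Module.End ℚ V} (hT : T ^ p ^ (n + 1) = 1) (hfix : ∀ v, (T ^ p ^ n) v = v → v = 0) :
    p ^ n ∣ Module.finrank ℚ V := by
  have : Fact p.Prime := ⟨hp⟩
  have hroot : aeval T (cyclotomic (p ^ (n + 1)) ℚ) = 0 := by
    ext v
    refine hfix _ (sub_eq_zero.1 ?_)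
    have hmul : aeval T ((X ^ p ^ n - 1) * cyclotomic (p ^ (n + 1)) ℚ) = 0 := by
      rw [mul_comm, cyclotomic_prime_pow_mul_X_pow_sub_one, map_sub, map_pow, aeval_X, hT, map_one,
        sub_self]
    rw [map_mul, map_sub, map_pow, aeval_X, map_one] at hmul
    exact LinearMap.congr_fun hmul v
  have hirr := cyclotomic.irreducible_rat (pow_pos hp.pos (n + 1))
  have hdvd := natDegree_dvd_finrank_of_aeval_eq_zero hirr hroot
  rw [natDegree_cyclotomic, Nat.totient_prime_pow_succ hp] at hdvd
  exact (dvd_mul_right _ _).trans hdvd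

end CyclotomicDimension

section FixedSubmodule

variable {k G V : Type*} [Field k] [Group G] [AddCommGroup V] [Module k V]

/-- The space `V^B` of vectors fixed by a subgroup `B`. -/
noncomputable def fixedSubmodule (ρ : Representation k G V) (B : Subgroup G) : Submodule k V :=
  Representation.invariants (ρ.comp B.subtype)

/-- The stabilizer of the vector `v` under the linear action `ρ`. -/
def vectorStabilizer (ρ : Representation k G V) (v : V) : Subgroup G :=
  let := MulAction.compHom V ρ
  MulAction.stabilizer G v

variable {ρ : Representation k G V} {B C : Subgroup G} {v : V} {g : G}

lemma mem_vectorStabilizer : g ∈ vectorStabilizer ρ v ↔ ρ g v = v :=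
  Iff.rfl

lemma mem_fixedSubmodule : v ∈ fixedSubmodule ρ B ↔ B ≤ vectorStabilizer ρ v :=
  Subtype.forall

lemma fixedSubmodule_sup : fixedSubmodule ρ (B ⊔ C) = fixedSubmodule ρ B ⊓ fixedSubmodule ρ C := by
  ext v
  simp only [Submodule.mem_inf, mem_fixedSubmodule, sup_le_iff]

lemma mem_map_iff_inv_apply_mem {W : Submodule k V} : v ∈ W.map (ρ g) ↔ ρ g⁻¹ v ∈ W := by
  constructor
  · rintro ⟨w, hw, rfl⟩
    rwa [ρ.inv_self_apply]
  · exact fun hv => ⟨_, hv, ρ.self_inv_apply g v⟩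

lemma vectorStabilizer_apply :
    vectorStabilizer ρ (ρ g v) = (vectorStabilizer ρ v).map (MulAut.conj g : G →* G) :=
  let := MulAction.compHom V ρ
  MulAction.stabilizer_smul_eq_stabilizer_map_conj g v

lemma map_fixedSubmodule (g : G) (B : Subgroup G) :
    (fixedSubmodule ρ B).map (ρ g) = fixedSubmodule ρ (B.map (MulAut.conj g : G →* G)) := by
  ext v
  obtain ⟨w, rfl⟩ := (ρ.apply_bijective g).surjective v
  rw [mem_map_iff_inv_apply_mem, ρ.inv_self_apply, mem_fixedSubmodule, mem_fixedSubmodule,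
    vectorStabilizer_apply, Subgroup.map_le_map_iff_of_injective (MulAut.conj g).injective]

lemma map_fixedSubmodule_of_normal [B.Normal] (g : G) :
    (fixedSubmodule ρ B).map (ρ g) = fixedSubmodule ρ B := by
  rw [map_fixedSubmodule, Subgroup.Normal.map_conj_eq]

lemma fixedSubmodule_bot : fixedSubmodule ρ ⊥ = ⊤ :=
  eq_top_iff.2 fun _ _ => mem_fixedSubmodule.2 bot_le

lemma fixedSubmodule_eq_top_iff : fixedSubmodule ρ B = ⊤ ↔ B ≤ MonoidHom.ker ρ := by
  simp only [Submodule.eq_top_iff', mem_fixedSubmodule, SetLike.le_def, mem_vectorStabilizer,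
    MonoidHom.mem_ker, LinearMap.ext_iff, Module.End.one_apply]
  exact forall_comm.trans (forall_congr' fun _ => forall_comm)

end FixedSubmodule

section Irreducible

variable {k G V : Type*} [Field k] [Group G] [AddCommGroup V] [Module k V]
  {ρ : Representation k G V}

lemma le_ker_of_normal_of_fixedSubmodule_ne_bot (hirr : ρ.IsIrreducibleRep) {R : Subgroup G}
    [R.Normal] (hR : fixedSubmodule ρ R ≠ ⊥) : R ≤ MonoidHom.ker ρ :=
  fixedSubmodule_eq_top_iff.1
    ((hirr.2 _ fun g => (map_fixedSubmodule_of_normal g).le).resolve_left hR)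

lemma iSup_map_eq_top (hirr : ρ.IsIrreducibleRep) {U : Submodule k V} (hU : U ≠ ⊥) :
    ⨆ g, U.map (ρ g) = ⊤ := by
  refine (hirr.2 _ fun h => ?_).resolve_left fun hbot => hU ?_
  · rw [Submodule.map_iSup]
    refine iSup_le fun g => le_iSup_of_le (h * g) ?_
    rw [map_mul, Module.End.mul_eq_comp, Submodule.map_comp]
  · have hle := le_iSup (fun g => U.map (ρ g)) 1
    rwa [hbot, map_one, Module.End.one_eq_id, Submodule.map_id, le_bot_iff] at hle

end Irreducible

section Imprimitivity

variable {k G V : Type*} [Field k] [Group G] [AddCommGroup V] [Module k V]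

/-- The action of `G` on the subspaces of a representation, `g` sending `W` to `ρ g (W)`. -/
abbrev submoduleMulAction (ρ : Representation k G V) : MulAction G (Submodule k V) where
  smul g W := W.map (ρ g)
  one_smul W := by
    change W.map (ρ 1) = W
    rw [map_one, Module.End.one_eq_id, Submodule.map_id]
  mul_smul g h W := by
    change W.map (ρ (g * h)) = (W.map (ρ h)).map (ρ g)
    rw [map_mul, Module.End.mul_eq_comp, Submodule.map_comp]

/-- The setwise stabilizer of the subspace `W`. -/
def submoduleStabilizer (ρ : Representation k G V) (W : Submodule k V) : Subgroup G :=
  let := submoduleMulAction ρ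
  MulAction.stabilizer G W

/-- The `G`-translates of the subspace `W`. -/
def translates (ρ : Representation k G V) (W : Submodule k V) : Set (Submodule k V) :=
  Set.range fun g => W.map (ρ g)

variable {ρ : Representation k G V} {W : Submodule k V}

lemma mem_submoduleStabilizer {g : G} : g ∈ submoduleStabilizer ρ W ↔ W.map (ρ g) = W :=
  Iff.rfl

lemma self_mem_translates : W ∈ translates ρ W :=
  ⟨1, by simp only [map_one, Module.End.one_eq_id, Submodule.map_id]⟩

lemma index_submoduleStabilizer : (submoduleStabilizer ρ W).index = (translates ρ W).ncard :=
  let := submoduleMulAction ρ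
  MulAction.index_stabilizer G W

lemma finrank_map_representation (g : G) (W : Submodule k V) :
    Module.finrank k (W.map (ρ g)) = Module.finrank k W :=
  (Submodule.equivMapOfInjective (ρ g) (ρ.apply_bijective g).injective W).finrank_eq.symm

lemma finrank_eq_index_mul_finrank [Finite G] [FiniteDimensional k V] (hirr : ρ.IsIrreducibleRep)
    (hW : W ≠ ⊥) (hind : sSupIndep (translates ρ W)) :
    Module.finrank k V = (submoduleStabilizer ρ W).index * Module.finrank k W := by
  classical
  have : Fintype (translates ρ W) := (Set.finite_range _).fintype
  have htop : ⨆ U : translates ρ W, U.1 = ⊤ := by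
    rw [← sSup_eq_iSup', translates, sSup_range, iSup_map_eq_top hirr hW]
  have hfinrank (U : translates ρ W) : Module.finrank k U.1 = Module.finrank k W := by
    obtain ⟨_, g, rfl⟩ := U
    exact finrank_map_representation g W
  have hinternal := DirectSum.isInternal_submodule_of_iSupIndep_of_iSup_eq_top
    ((sSupIndep_iff _).1 hind) htop
  calc Module.finrank k V
      = ∑ U : translates ρ W, Module.finrank k U.1 := by
        rw [← (LinearEquiv.ofBijective (DirectSum.coeLinearMap _) hinternal).finrank_eq,
          Module.finrank_directSum]
    _ = (submoduleStabilizer ρ W).index * Module.finrank k W := by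
        simp only [hfinrank, Finset.sum_const, Finset.card_univ, smul_eq_mul,
          index_submoduleStabilizer, ← Nat.card_coe_set_eq, Nat.card_eq_fintype_card]

/-- The representation of the setwise stabilizer of `W` on `W`. -/
def stabilizerRepresentation (ρ : Representation k G V) (W : Submodule k V) :
    Representation k (submoduleStabilizer ρ W) W :=
  Representation.subrepresentation (ρ.comp (submoduleStabilizer ρ W).subtype) W fun g =>
    Submodule.map_le_iff_le_comap.1 (mem_submoduleStabilizer.1 g.2).le

lemma isIrreducibleRep_stabilizerRepresentation (hirr : ρ.IsIrreducibleRep) (hW : W ≠ ⊥)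
    (hind : sSupIndep (translates ρ W)) : (stabilizerRepresentation ρ W).IsIrreducibleRep := by
  refine ⟨Submodule.nontrivial_iff_ne_bot.2 hW, fun U hU => or_iff_not_imp_left.2 fun hU0 => ?_⟩
  have hinj : Function.Injective (Submodule.map W.subtype) :=
    Submodule.map_injective_of_injective W.injective_subtype
  have hU0' : U.map W.subtype ≠ ⊥ := fun h => hU0 (hinj (h.trans (Submodule.map_bot _).symm))
  have hUW : U.map W.subtype ≤ W := Submodule.map_subtype_le W U
  have hstab (g : G) (hg : g ∈ submoduleStabilizer ρ W) :
      (U.map W.subtype).map (ρ g) ≤ U.map W.subtype := by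
    have hcomm : ρ g ∘ₗ W.subtype = W.subtype ∘ₗ stabilizerRepresentation ρ W ⟨g, hg⟩ := rfl
    rw [← Submodule.map_comp, hcomm, Submodule.map_comp]
    exact Submodule.map_mono (hU ⟨g, hg⟩)
  -- Modulo the complement `X` of `W` formed by the other translates, `U` already generates `V`.
  set X := sSup (translates ρ W \ {W})
  have hdisj : W ⊓ X = ⊥ := (hind self_mem_translates).eq_bot
  have hsup : U.map W.subtype ⊔ X = ⊤ := by
    rw [eq_top_iff, ← iSup_map_eq_top hirr hU0']
    refine iSup_le fun g => ?_
    by_cases hg : g ∈ submoduleStabilizer ρ W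
    · exact (hstab g hg).trans le_sup_left
    · have hX : W.map (ρ g) ≤ X := le_sSup ⟨⟨g, rfl⟩, hg⟩
      exact (Submodule.map_mono hUW).trans (hX.trans le_sup_right)
  have hUW' : U.map W.subtype = W :=
    eq_of_le_of_inf_le_of_sup_le hUW (hdisj ▸ bot_le) (hsup ▸ le_top)
  exact hinj (hUW'.trans (Submodule.map_subtype_top W).symm)

end Imprimitivity

section NoncyclicAbelian

variable {k G V : Type*} [Field k] [Group G] [AddCommGroup V] [Module k V]

-- Modulo the annihilator of a suitable vector `v` the group algebra of `A` becomes a domain, and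
-- `A` embeds into its group of units because no nontrivial element of `A` fixes `v`.
lemma isCyclic_of_forall_fixed_eq_zero {A : Type*} [CommGroup A] [Finite A] [Nontrivial V]
    (σ : Representation k A V) (hfree : ∀ a ≠ 1, ∀ v, σ a v = v → v = 0) : IsCyclic A := by
  have : IsNoetherianRing (MonoidAlgebra k A) := IsNoetherianRing.of_finite k _
  have : Nontrivial σ.asModule := ‹Nontrivial V›
  obtain ⟨P, hP⟩ := associatedPrimes.nonempty (MonoidAlgebra k A) σ.asModule
  have hprime : P.IsPrime := hP.isPrime
  obtain ⟨v, hv⟩ := (isAssociatedPrime_iff.1 hP).2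
  have hv0 : v ≠ 0 := by
    rintro rfl
    refine hprime.ne_top ((Ideal.eq_top_iff_one P).2 ?_)
    rw [hv, Submodule.mem_colon_singleton, smul_zero]
    exact zero_mem _
  let φ : A →* MonoidAlgebra k A ⧸ P :=
    (Ideal.Quotient.mk P : MonoidAlgebra k A →* _).comp (MonoidAlgebra.of k A)
  refine isCyclic_of_injective_ringHom φ ((injective_iff_map_eq_one φ).2 fun a ha => ?_)
  have hmem : MonoidAlgebra.of k A a - 1 ∈ P :=
    Ideal.Quotient.eq.1 (ha.trans (map_one (Ideal.Quotient.mk P)).symm)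
  rw [hv, Submodule.mem_colon_singleton, Submodule.mem_bot, sub_smul, one_smul, sub_eq_zero] at hmem
  have hfix := congrArg σ.asModuleEquiv hmem
  rw [Representation.asModuleEquiv_map_smul, Representation.asAlgebraHom_of] at hfix
  by_contra ha1
  exact hv0 (σ.asModuleEquiv.injective ((hfree a ha1 _ hfix).trans (map_zero _).symm))

variable {ρ : Representation k G V} {A : Subgroup G}

open scoped IsMulCommutative in
lemma exists_fixedSubmodule_zpowers_ne_bot [Finite G] [Nontrivial V] [IsMulCommutative A]
    (hA : ¬ IsCyclic A) : ∃ a ∈ A, a ≠ 1 ∧ fixedSubmodule ρ (Subgroup.zpowers a) ≠ ⊥ := by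
  by_contra! hfree
  refine hA (isCyclic_of_forall_fixed_eq_zero (ρ.comp A.subtype) fun a ha v hv => ?_)
  have hmem : v ∈ fixedSubmodule ρ (Subgroup.zpowers (a : G)) :=
    mem_fixedSubmodule.2 (Subgroup.zpowers_le.2 hv)
  rwa [hfree a a.2 (by simpa using ha), Submodule.mem_bot] at hmem

lemma exists_maximal_card_fixedSubmodule_ne_bot [Finite G] [Nontrivial V] [IsMulCommutative A]
    (hA : ¬ IsCyclic A) :
    ∃ B ≤ A, B ≠ ⊥ ∧ fixedSubmodule ρ B ≠ ⊥ ∧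
      ∀ C ≤ A, fixedSubmodule ρ C ≠ ⊥ → Nat.card C ≤ Nat.card B := by
  obtain ⟨B, ⟨hBA, hB⟩, hmax⟩ := Set.exists_max_image
    {B | B ≤ A ∧ fixedSubmodule ρ B ≠ ⊥} (fun B => Nat.card B) (Set.toFinite _)
    ⟨⊥, bot_le, by rw [fixedSubmodule_bot]; exact top_ne_bot⟩
  obtain ⟨a, haA, ha1, ha⟩ := exists_fixedSubmodule_zpowers_ne_bot (ρ := ρ) hA
  refine ⟨B, hBA, ?_, hB, fun C hCA hC => hmax C ⟨hCA, hC⟩⟩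
  rintro rfl
  have hcard := hmax (Subgroup.zpowers a) ⟨Subgroup.zpowers_le.2 haA, ha⟩
  rw [Subgroup.card_bot] at hcard
  exact ha1 (Subgroup.zpowers_eq_bot.1 (Subgroup.eq_bot_of_card_le _ hcard))

lemma averageMap_mem [Fintype G] [Invertible (Fintype.card G : k)] {W : Submodule k V}
    (hW : ∀ g, W.map (ρ g) ≤ W) {v : V} (hv : v ∈ W) : ρ.averageMap v ∈ W := by
  simp only [Representation.averageMap, GroupAlgebra.average, map_smul, map_sum,
    Representation.asAlgebraHom_of, LinearMap.smul_apply, LinearMap.sum_apply]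
  exact W.smul_mem _ (W.sum_mem fun g _ => hW g (Submodule.mem_map_of_mem hv))

lemma disjoint_fixedSubmodule_iSup {B : Subgroup G} (hB : (Nat.card B : k) ≠ 0) {ι : Type*}
    {W : ι → Submodule k V} (hW : ∀ i, ∀ b ∈ B, (W i).map (ρ b) ≤ W i)
    (hdisj : ∀ i, Disjoint (fixedSubmodule ρ B) (W i)) :
    Disjoint (fixedSubmodule ρ B) (⨆ i, W i) := by
  have : Finite B := Nat.finite_of_card_ne_zero fun h => hB (by rw [h, Nat.cast_zero])
  let : Fintype B := Fintype.ofFinite B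
  let : Invertible (Fintype.card B : k) := invertibleOfNonzero (by rwa [← Nat.card_eq_fintype_card])
  have hproj := Representation.isProj_averageMap (ρ.comp B.subtype)
  have hker : ⨆ i, W i ≤ LinearMap.ker (Representation.averageMap (ρ.comp B.subtype)) :=
    iSup_le fun i w hw => Submodule.disjoint_def.1 (hdisj i) _ (hproj.map_mem w)
      (averageMap_mem (ρ := ρ.comp B.subtype) (fun b => hW i b b.2) hw)
  refine Submodule.disjoint_def.2 fun v hvB hv => ?_
  rw [← hproj.map_id v hvB]
  exact hker hv

lemma disjoint_fixedSubmodule_of_card_le {n : ℕ} [Finite G]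
    (hmax : ∀ C ≤ A, fixedSubmodule ρ C ≠ ⊥ → Nat.card C ≤ n) {C D : Subgroup G} (hC : C ≤ A)
    (hD : D ≤ A) (hCn : Nat.card C = n) (hDn : Nat.card D = n) (hCD : C ≠ D) :
    Disjoint (fixedSubmodule ρ C) (fixedSubmodule ρ D) := by
  rw [disjoint_iff, ← fixedSubmodule_sup]
  by_contra hne
  have hcard := hmax (C ⊔ D) (sup_le hC hD) hne
  exact hCD ((Subgroup.eq_of_le_of_card_ge le_sup_left (hcard.trans hCn.ge)).trans
    (Subgroup.eq_of_le_of_card_ge le_sup_right (hcard.trans hDn.ge)).symm)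

lemma map_fixedSubmodule_of_isMulCommutative [IsMulCommutative A] {a : G} (ha : a ∈ A)
    {C : Subgroup G} (hC : C ≤ A) : (fixedSubmodule ρ C).map (ρ a) = fixedSubmodule ρ C := by
  have hconj : C.map (MulAut.conj a : G →* G) = C := by
    have hcent : a ∈ Subgroup.centralizer (C : Set G) := fun c hc => setLike_mul_comm (hC hc) ha
    exact Subgroup.mem_normalizer_iff_map_conj_eq.1
      (Subgroup.centralizer_le_normalizer (C : Set G) hcent)
  rw [map_fixedSubmodule, hconj]

lemma sSupIndep_translates_fixedSubmodule [CharZero k] [Finite G] [A.Normal] [IsMulCommutative A]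
    {B : Subgroup G} (hBA : B ≤ A)
    (hmax : ∀ C ≤ A, fixedSubmodule ρ C ≠ ⊥ → Nat.card C ≤ Nat.card B) :
    sSupIndep (translates ρ (fixedSubmodule ρ B)) := by
  have hle (g : G) : B.map (MulAut.conj g : G →* G) ≤ A :=
    (Subgroup.map_mono hBA).trans (Subgroup.Normal.map_conj_eq A g).le
  have hcard (g : G) : Nat.card (B.map (MulAut.conj g : G →* G)) = Nat.card B :=
    Subgroup.card_map_of_injective (MulAut.conj g).injective
  rintro _ ⟨g, rfl⟩
  simp only [map_fixedSubmodule, sSup_eq_iSup']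
  refine disjoint_fixedSubmodule_iSup (Nat.cast_ne_zero.2 Nat.card_pos.ne') ?_ ?_
  · rintro ⟨_, ⟨h, rfl⟩, -⟩ b hb
    simp only [map_fixedSubmodule h]
    exact (map_fixedSubmodule_of_isMulCommutative (hle g hb) (hle h)).le
  · rintro ⟨_, ⟨h, rfl⟩, hne⟩
    simp only [Set.mem_singleton_iff, map_fixedSubmodule] at hne ⊢
    exact disjoint_fixedSubmodule_of_card_le hmax (hle g) (hle h) (hcard g) (hcard h)
      fun heq => hne (congrArg _ heq.symm)

lemma exists_sSupIndep_translates [CharZero k] [Finite G] (hfaith : Function.Injective ρ)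
    (hirr : ρ.IsIrreducibleRep) [A.Normal] [IsMulCommutative A] (hA : ¬ IsCyclic A) :
    ∃ W ≠ ⊥, sSupIndep (translates ρ W) ∧ submoduleStabilizer ρ W ≠ ⊤ := by
  have : Nontrivial V := hirr.1
  obtain ⟨B, hBA, hB1, hB, hmax⟩ := exists_maximal_card_fixedSubmodule_ne_bot (ρ := ρ) hA
  refine ⟨fixedSubmodule ρ B, hB, sSupIndep_translates_fixedSubmodule hBA hmax, fun htop => hB1 ?_⟩
  have hstab (g : G) : (fixedSubmodule ρ B).map (ρ g) = fixedSubmodule ρ B :=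
    mem_submoduleStabilizer.1 (htop ▸ Subgroup.mem_top g)
  have hker := fixedSubmodule_eq_top_iff.1 ((hirr.2 _ fun g => (hstab g).le).resolve_left hB)
  rwa [(MonoidHom.ker_eq_bot_iff ρ).2 hfaith, le_bot_iff] at hker

end NoncyclicAbelian

section FrattiniBound

variable {G : Type*} [Group G] {p : ℕ}

lemma normal_zpowers_pow {x : G} (hx : (Subgroup.zpowers x).Normal) (m : ℕ) :
    (Subgroup.zpowers (x ^ m)).Normal := by
  refine ⟨fun y hy g => ?_⟩
  obtain ⟨i, rfl⟩ := hy
  obtain ⟨a, ha⟩ := exists_semiconjBy_zpow hx g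
  have hconj := (ha.pow_right m).zpow_right i
  refine ⟨a * i, eq_mul_inv_of_mul_eq (Eq.trans ?_ hconj.eq.symm)⟩
  simp only [← zpow_natCast, ← zpow_mul]
  ring_nf

lemma orderOf_dvd_of_normal_zpowers [Fact p.Prime] (hG : IsPGroup p G) {V : Type*}
    [AddCommGroup V] [Module ℚ V] [FiniteDimensional ℚ V] {ρ : Representation ℚ G V}
    (hfaith : Function.Injective ρ) (hirr : ρ.IsIrreducibleRep) {x : G}
    (hx : (Subgroup.zpowers x).Normal) :
    orderOf x ∣ p ^ ((Module.finrank ℚ V).factorization p + 1) := by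
  have hp : p.Prime := Fact.out
  have : Nontrivial V := hirr.1
  obtain ⟨_ | n, hn⟩ := IsPGroup.iff_orderOf.1 hG x
  · exact hn ▸ one_dvd _
  have := normal_zpowers_pow hx (p ^ n)
  have hne : x ^ p ^ n ≠ 1 := fun h => by
    have := (Nat.pow_dvd_pow_iff_le_right hp.one_lt).1 (hn ▸ orderOf_dvd_of_pow_eq_one h)
    lia
  have hfix : fixedSubmodule ρ (Subgroup.zpowers (x ^ p ^ n)) = ⊥ := by
    by_contra h
    have hker := le_ker_of_normal_of_fixedSubmodule_ne_bot hirr h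
    rw [(MonoidHom.ker_eq_bot_iff ρ).2 hfaith, le_bot_iff, Subgroup.zpowers_eq_bot] at hker
    exact hne hker
  have hdvd : p ^ n ∣ Module.finrank ℚ V := by
    refine pow_dvd_finrank_of_pow_prime_pow_eq_one hp (T := ρ x) ?_ fun v hv => ?_
    · rw [← map_pow, ← hn, pow_orderOf_eq_one, map_one]
    · rw [← map_pow] at hv
      rw [← Submodule.mem_bot ℚ, ← hfix]
      exact mem_fixedSubmodule.2 (Subgroup.zpowers_le.2 hv)
  rw [hn]
  exact pow_dvd_pow p (Nat.succ_le_succ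
    ((hp.pow_dvd_iff_le_factorization Module.finrank_pos.ne').1 hdvd))

variable {k V : Type*} [Field k] [AddCommGroup V] [Module k V] {ρ : Representation k G V}

lemma iterate_pFrattini_top_le_ker_of_submoduleStabilizer {e n : ℕ} (hirr : ρ.IsIrreducibleRep)
    {W : Submodule k V} (hW : W ≠ ⊥)
    (hindex : (pFrattini p)^[e] ⊤ ≤ submoduleStabilizer ρ W)
    (hker : (pFrattini p)^[n] ⊤ ≤ MonoidHom.ker (stabilizerRepresentation ρ W)) :
    (pFrattini p)^[n + e] ⊤ ≤ MonoidHom.ker ρ := by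
  have hle : (pFrattini p)^[n + e] ⊤ ≤
      (MonoidHom.ker (stabilizerRepresentation ρ W)).map (submoduleStabilizer ρ W).subtype :=
    calc (pFrattini p)^[n + e] ⊤
        ≤ (pFrattini p)^[n] (submoduleStabilizer ρ W) := by
          rw [Function.iterate_add_apply]
          exact pFrattini_mono.iterate n hindex
      _ = ((pFrattini p)^[n] ⊤).map (submoduleStabilizer ρ W).subtype := by
          rw [map_iterate_pFrattini, ← MonoidHom.range_eq_map, Subgroup.range_subtype]
      _ ≤ _ := Subgroup.map_mono hker
  have hWfix : W ≤ fixedSubmodule ρ ((pFrattini p)^[n + e] ⊤) := by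
    refine fun w hw => mem_fixedSubmodule.2 (hle.trans ?_)
    rintro _ ⟨g, hg, rfl⟩
    exact congrArg Subtype.val (LinearMap.congr_fun (MonoidHom.mem_ker.1 hg) ⟨w, hw⟩)
  have : ((pFrattini p)^[n + e] (⊤ : Subgroup G)).Normal := normal_iterate_pFrattini _
  exact le_ker_of_normal_of_fixedSubmodule_ne_bot hirr (ne_bot_of_le_ne_bot hW hWfix)

/-- The faithful representation of `G ⧸ ker ρ` induced by `ρ`. -/
def quotientKerRepresentation (ρ : Representation k G V) :
    Representation k (G ⧸ MonoidHom.ker ρ) V :=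
  QuotientGroup.lift (MonoidHom.ker ρ) ρ le_rfl

lemma injective_quotientKerRepresentation : Function.Injective (quotientKerRepresentation ρ) :=
  (MonoidHom.ker_eq_bot_iff _).1
    ((QuotientGroup.ker_lift _ _ le_rfl).trans (QuotientGroup.map_mk'_self _))

lemma isIrreducibleRep_quotientKerRepresentation (hirr : ρ.IsIrreducibleRep) :
    (quotientKerRepresentation ρ).IsIrreducibleRep :=
  ⟨hirr.1, fun W hW => hirr.2 W fun g => hW (QuotientGroup.mk g)⟩

lemma iterate_pFrattini_top_le_of_quotient {N : Subgroup G} [N.Normal] {n : ℕ}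
    (h : (pFrattini p)^[n] (⊤ : Subgroup (G ⧸ N)) = ⊥) : (pFrattini p)^[n] ⊤ ≤ N := by
  rw [← QuotientGroup.ker_mk' N, ← Subgroup.map_eq_bot_iff, map_iterate_pFrattini,
    ← MonoidHom.range_eq_map, MonoidHom.range_eq_top.2 (QuotientGroup.mk'_surjective N), h]

lemma iterate_pFrattini_top_eq_bot_of_forall_isCyclic [Fact p.Prime] [Finite G]
    (hG : IsPGroup p G) [Module ℚ V] [FiniteDimensional ℚ V] {ρ : Representation ℚ G V}
    (hfaith : Function.Injective ρ) (hirr : ρ.IsIrreducibleRep)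
    (hcyclic : ∀ A : Subgroup G, A.Normal → IsMulCommutative A → IsCyclic A) :
    (pFrattini p)^[(Module.finrank ℚ V).factorization p + 1] (⊤ : Subgroup G) = ⊥ := by
  set n := (Module.finrank ℚ V).factorization p
  obtain ⟨x, hx, hle⟩ := exists_normal_zpowers_pFrattini_top_le hG hcyclic
  have hxn : (x ^ p) ^ p ^ n = 1 := by
    rw [← pow_mul, ← pow_succ']
    exact orderOf_dvd_iff_pow_eq_one.1 (orderOf_dvd_of_normal_zpowers hG hfaith hirr hx)
  rw [eq_bot_iff, Function.iterate_succ_apply]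
  calc (pFrattini p)^[n] (pFrattini p ⊤)
      ≤ (pFrattini p)^[n] (Subgroup.zpowers (x ^ p)) := pFrattini_mono.iterate n hle
    _ ≤ Subgroup.zpowers ((x ^ p) ^ p ^ n) := iterate_pFrattini_zpowers_le _ n
    _ = ⊥ := Subgroup.zpowers_eq_bot.2 hxn

lemma factorization_finrank_eq_add [Fact p.Prime] [Finite G] [FiniteDimensional k V]
    (hirr : ρ.IsIrreducibleRep) {W : Submodule k V} (hW : W ≠ ⊥)
    (hind : sSupIndep (translates ρ W)) {e : ℕ} (he : (submoduleStabilizer ρ W).index = p ^ e) :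
    (Module.finrank k V).factorization p = (Module.finrank k W).factorization p + e := by
  have hp : p.Prime := Fact.out
  rw [finrank_eq_index_mul_finrank hirr hW hind, he, add_comm,
    Nat.factorization_mul (pow_ne_zero e hp.ne_zero) (Submodule.finrank_eq_zero.not.2 hW),
    Finsupp.add_apply, hp.factorization_pow, Finsupp.single_eq_same]

theorem iterate_pFrattini_top_le_ker {G V : Type*} [Group G] [Finite G] [AddCommGroup V]
    [Module ℚ V] [FiniteDimensional ℚ V] [Fact p.Prime] (hG : IsPGroup p G)
    {ρ : Representation ℚ G V} (hirr : ρ.IsIrreducibleRep) :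
    (pFrattini p)^[(Module.finrank ℚ V).factorization p + 1] ⊤ ≤ MonoidHom.ker ρ := by
  induction hcard : Nat.card G using Nat.strong_induction_on generalizing G V with
  | _ m ih =>
  subst hcard
  let σ := quotientKerRepresentation ρ
  have hQ : IsPGroup p (G ⧸ MonoidHom.ker ρ) := hG.to_quotient _
  have hσ : Function.Injective σ := injective_quotientKerRepresentation
  have hσirr : σ.IsIrreducibleRep := isIrreducibleRep_quotientKerRepresentation hirr
  refine iterate_pFrattini_top_le_of_quotient ?_
  by_cases! hcyclic : ∀ A : Subgroup (G ⧸ MonoidHom.ker ρ),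
    A.Normal → IsMulCommutative A → IsCyclic A
  · exact iterate_pFrattini_top_eq_bot_of_forall_isCyclic hQ hσ hσirr hcyclic
  obtain ⟨A, hnormal, hcomm, hA⟩ := hcyclic
  obtain ⟨W, hW, hind, htop⟩ := exists_sSupIndep_translates hσ hσirr hA
  obtain ⟨e, he⟩ := hQ.index (submoduleStabilizer σ W)
  have hlt : Nat.card (submoduleStabilizer σ W) < Nat.card G :=
    (lt_of_not_ge fun h => htop (Subgroup.eq_top_of_le_card _ h)).trans_le
      (Nat.card_le_card_of_surjective _ (QuotientGroup.mk'_surjective _))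
  have hker := ih _ hlt (hQ.to_subgroup _)
    (isIrreducibleRep_stabilizerRepresentation hσirr hW hind) rfl
  rw [factorization_finrank_eq_add hσirr hW hind he, add_right_comm, ← le_bot_iff,
    ← (MonoidHom.ker_eq_bot_iff σ).2 hσ]
  exact iterate_pFrattini_top_le_ker_of_submoduleStabilizer hσirr hW
    (iterate_pFrattini_top_le_of_index_eq hQ he) hker

end FrattiniBound

/-- If a finite `p`-group `G` has a faithful irreducible representation on an
`N`-dimensional rational vector space, then `𝓕(G) ≤ ν_p(N) + 1`. -/
theorem frattiniLength_le_of_faithful_irreducible_rat (p : ℕ) (hp : p.Prime)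
    (G : Type*) [Group G] [Finite G] (hG : IsPGroup p G)
    (V : Type*) [AddCommGroup V] [Module ℚ V] [FiniteDimensional ℚ V]
    (ρ : Representation ℚ G V) (hfaith : Function.Injective ρ)
    (hirr : ρ.IsIrreducibleRep)
    (N : ℕ) (hN1 : 1 ≤ N) (hN : Module.finrank ℚ V = N) :
    frattiniLength G ≤ N.factorization p + 1 := by
  have := Fact.mk hp
  have hle := iterate_pFrattini_top_le_ker hG hirr
  rw [(MonoidHom.ker_eq_bot_iff ρ).2 hfaith, hN] at hle
  exact Nat.sInf_le (le_bot_iff.1 ((frattiniSeries_le_iterate_pFrattini _).trans hle))
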